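/- Let G be a connected non-complete graph and u,v a pair of vertices maximizing |I(u,v)|. If neither u nor v is a weakly toll extreme vertex of G, then G has a weakly toll interval set of size at most 8, i.e., wtn(G) ≤ 8. -/

import Mathlib

open SimpleGraph

variable {V : Type*}

/-- Closed neighborhood N[x]. -/
def closedNbhd (G : SimpleGraph V) (x : V) : Set V := insert x (G.neighborSet x)

/-- The true-twin class of `x`: vertices with the same closed neighborhood. -/
def twinClass (G : SimpleGraph V) (x : V) : Set V :=
  {y | closedNbhd G y = closedNbhd G x}

/-- A weakly toll walk between distinct nonadjacent endpoints: the first endpoint is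
adjacent only to the second vertex of the walk, and the last endpoint only to the
second-to-last vertex. -/
def IsWeaklyTollWalk (G : SimpleGraph V) {u w : V} (p : G.Walk u w) : Prop :=
  u ≠ w ∧ ¬ G.Adj u w ∧
  (∀ x ∈ p.support, G.Adj u x → x = p.getVert 1) ∧
  (∀ x ∈ p.support, G.Adj x w → x = p.getVert (p.length - 1))

/-- The weakly toll interval of a set. -/
def wtInterval (G : SimpleGraph V) (S : Set V) : Set V :=
  S ∪ {x | ∃ u ∈ S, ∃ w ∈ S, ∃ p : G.Walk u w, IsWeaklyTollWalk G p ∧ x ∈ p.support}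

/-- Weakly toll convex set. -/
def WTConvex (G : SimpleGraph V) (S : Set V) : Prop := wtInterval G S = S

/-- The weakly toll convex hull. -/
def wtHull (G : SimpleGraph V) (S : Set V) : Set V :=
  ⋂₀ {T : Set V | S ⊆ T ∧ WTConvex G T}

/-- The weakly toll interval number. -/
noncomputable def wtn (G : SimpleGraph V) [Fintype V] : ℕ :=
  sInf {n | ∃ S : Finset V, S.card = n ∧ wtInterval G ↑S = Set.univ}

/-- The weakly toll hull number. -/
noncomputable def wth (G : SimpleGraph V) [Fintype V] : ℕ :=
  sInf {n | ∃ S : Finset V, S.card = n ∧ wtHull G ↑S = Set.univ}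

/-- `S` separates some pair of vertices of `G`. -/
def IsSeparator (G : SimpleGraph V) (S : Set V) : Prop :=
  ∃ a, ∃ ha : a ∈ (Sᶜ : Set V), ∃ b, ∃ hb : b ∈ (Sᶜ : Set V),
    G.Reachable a b ∧ ¬ (G.induce (Sᶜ : Set V)).Reachable ⟨a, ha⟩ ⟨b, hb⟩

/-- A clique separator. -/
def IsCliqueSeparator (G : SimpleGraph V) (S : Set V) : Prop :=
  G.IsClique S ∧ IsSeparator G S

/-- A graph is prime if it has no clique separator. -/
def IsPrime (G : SimpleGraph V) : Prop := ∀ S : Set V, ¬ IsCliqueSeparator G S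

/-- Maximal prime subgraph (given by its vertex set). -/
def IsMPSubgraph (G : SimpleGraph V) (M : Set V) : Prop :=
  IsPrime (G.induce M) ∧ ∀ M' : Set V, M ⊆ M' → IsPrime (G.induce M') → M' = M

/-- Extremal mp-subgraph. -/
def IsExtremalMP (G : SimpleGraph V) (M : Set V) : Prop :=
  IsMPSubgraph G M ∧ ∃ M', IsMPSubgraph G M' ∧ M' ≠ M ∧
    ∀ M'', IsMPSubgraph G M'' → M'' ≠ M → M ∩ M'' ⊆ M ∩ M'

/-- Vertices of `M` shared with another mp-subgraph. -/
def Sh (G : SimpleGraph V) (M : Set V) : Set V :=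
  {v | v ∈ M ∧ ∃ M', IsMPSubgraph G M' ∧ M' ≠ M ∧ v ∈ M'}

/-- Vertices exclusive to `M`. -/
def Exc (G : SimpleGraph V) (M : Set V) : Set V := M \ Sh G M

/-- Induced path: a path with no chords. -/
def IsInducedPath (G : SimpleGraph V) {u v : V} (p : G.Walk u v) : Prop :=
  p.IsPath ∧ ∀ i j : ℕ, i + 1 < j → j ≤ p.length → ¬ G.Adj (p.getVert i) (p.getVert j)

/-- Monophonic interval. -/
def monoInterval (G : SimpleGraph V) (S : Set V) : Set V :=
  S ∪ {x | ∃ u ∈ S, ∃ w ∈ S, ∃ p : G.Walk u w, IsInducedPath G p ∧ x ∈ p.support}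

/-- Monophonically convex set. -/
def MonoConvex (G : SimpleGraph V) (S : Set V) : Prop := monoInterval G S = S

/-- Monophonic hull. -/
def monoHull (G : SimpleGraph V) (S : Set V) : Set V :=
  ⋂₀ {T : Set V | S ⊆ T ∧ MonoConvex G T}

/-- `C` is connected, contains the nonadjacent vertices `a` and `b`, and each of them has at most
one neighbor in `C`. -/
structure IsPendantLink (G : SimpleGraph V) (a b : V) (C : Set V) : Prop where
  ne : a ≠ b
  not_adj : ¬ G.Adj a b
  left_mem : a ∈ C
  right_mem : b ∈ C
  connected : (G.induce C).Connected
  left_unique : ∀ y ∈ C, ∀ z ∈ C, G.Adj a y → G.Adj a z → y = z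
  right_unique : ∀ y ∈ C, ∀ z ∈ C, G.Adj b y → G.Adj b z → y = z

/-- The union of the pendant links between `a` and `b`. -/
def linkInterval (G : SimpleGraph V) (a b : V) : Set V :=
  {x | ∃ C, IsPendantLink G a b C ∧ x ∈ C}

section Connectivity

variable {G : SimpleGraph V} {C : Set V} {x y : V}

lemma connected_induce_insert (hC : (G.induce C).Connected) (hy : y ∈ C) (hxy : G.Adj x y) :
    (G.induce (insert x C)).Connected := by
  have h := induce_union_connected (induce_pair_connected_of_adj hxy).preconnected
    hC.preconnected ⟨y, by simp, hy⟩
  have e : ({x, y} ∪ C : Set V) = insert x C := by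
    rw [Set.insert_union, Set.singleton_union, Set.insert_eq_of_mem hy]
  rwa [e] at h

lemma exists_walk_support_subset (hC : (G.induce C).Connected) (hx : x ∈ C) (hy : y ∈ C) :
    ∃ p : G.Walk x y, ∀ z ∈ p.support, z ∈ C := by
  obtain ⟨p⟩ := hC.preconnected ⟨x, hx⟩ ⟨y, hy⟩
  refine ⟨p.map (Embedding.induce C).toHom, fun z hz => ?_⟩
  obtain ⟨w, -, rfl⟩ := List.mem_map.1 (Walk.support_map _ p ▸ hz)
  exact w.2

/-- A vertex of a connected set may be replaced by one with more neighbors. -/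
lemma connected_induce_replace {u a : V} (hC : (G.induce C).Connected) (hu : u ∈ C)
    (h : ∀ y ∈ C, G.Adj u y → G.Adj a y) :
    (G.induce (insert a (C \ {u}))).Connected := by
  classical
  let f : G.induce C →g G.induce (insert a (C \ {u})) :=
    { toFun := fun y => if hy : y.1 = u then ⟨a, by simp⟩ else ⟨y.1, by simp [hy]⟩
      map_rel' := by
        rintro ⟨y, hy⟩ ⟨z, hz⟩ hyz
        have hyz' : G.Adj y z := hyz
        have := hyz'.symm
        by_cases h1 : y = u <;> by_cases h2 : z = u <;> simp [h1, h2] <;> subst_vars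
        · simp at hyz'
        · exact h _ hz hyz'
        · exact (h _ hy this).symm
        · exact hyz' }
  refine hC.map f ?_
  rintro ⟨y, hy⟩
  rcases hy with rfl | ⟨hy, hyu⟩
  · exact ⟨⟨u, hu⟩, by simp [f]⟩
  · exact ⟨⟨y, hy⟩, by have : y ≠ u := hyu; simp [f, this]⟩

lemma exists_connected_subset_right_unique (hC : (G.induce C).Connected) (hx : x ∈ C)
    (hy : y ∈ C) :
    ∃ D ⊆ C, (G.induce D).Connected ∧ x ∈ D ∧ y ∈ D ∧
      ∀ z ∈ D, ∀ w ∈ D, G.Adj y z → G.Adj y w → z = w := by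
  obtain ⟨p, hp⟩ := exists_walk_support_subset hC hx hy
  induction p with
  | nil =>
    exact ⟨{_}, by simpa using hx, by simp [induce_singleton_eq_top, connected_top], by simp,
      by simp, by simp⟩
  | @cons x z y h p ih =>
    have hz : z ∈ C := hp z (by simp)
    obtain ⟨D, hDC, hD, hzD, hyD, hu⟩ := ih hz hy fun w hw => hp w (by simp [hw])
    by_cases hxy : G.Adj x y
    · refine ⟨{x, y}, by grind, induce_pair_connected_of_adj hxy, by simp, by simp, ?_⟩
      have := G.loopless.irrefl y
      grind
    · refine ⟨insert x D, by grind, connected_induce_insert hD hzD h, by simp, by simp [hyD], ?_⟩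
      have := fun h : G.Adj y x => hxy h.symm
      grind

end Connectivity

section PendantLinks

variable {G : SimpleGraph V} {C : Set V} {u v : V}

lemma IsPendantLink.symm (h : IsPendantLink G u v C) : IsPendantLink G v u C :=
  ⟨h.ne.symm, fun e => h.not_adj e.symm, h.right_mem, h.left_mem, h.connected, h.right_unique,
    h.left_unique⟩

lemma linkInterval_comm (a b : V) : linkInterval G a b = linkInterval G b a := by
  ext x
  exact ⟨fun ⟨C, h, hx⟩ => ⟨C, h.symm, hx⟩, fun ⟨C, h, hx⟩ => ⟨C, h.symm, hx⟩⟩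

lemma IsPendantLink.subset_linkInterval (h : IsPendantLink G u v C) : C ⊆ linkInterval G u v :=
  fun _ hx => ⟨C, h, hx⟩

lemma exists_isPendantLink (hG : G.Connected) (hne : u ≠ v) (hadj : ¬ G.Adj u v) :
    ∃ C, IsPendantLink G u v C := by
  have huniv : (G.induce Set.univ).Connected := (induceUnivIso G).connected_iff.2 hG
  obtain ⟨D, -, hD, hu, hv, h⟩ := exists_connected_subset_right_unique huniv
    (Set.mem_univ u) (Set.mem_univ v)
  obtain ⟨E, hED, hE, hv', hu', h'⟩ := exists_connected_subset_right_unique hD hv hu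
  exact ⟨E, hne, hadj, hu', hv', hE, h', fun y hy z hz => h y (hED hy) z (hED hz)⟩

lemma IsPendantLink.insert {x y : V} (h : IsPendantLink G u v C) (hy : y ∈ C) (hxy : G.Adj x y)
    (hu : ¬ G.Adj u x) (hv : ¬ G.Adj v x) : IsPendantLink G u v (insert x C) := by
  obtain ⟨h1, h2, h3, h4, h5, h6, h7⟩ := h
  exact ⟨h1, h2, by simp [h3], by simp [h4], connected_induce_insert h5 hy hxy, by grind, by grind⟩

lemma IsWeaklyTollWalk.isPendantLink {p : G.Walk u v} (h : IsWeaklyTollWalk G p) :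
    IsPendantLink G u v {x | x ∈ p.support} := by
  obtain ⟨h1, h2, h3, h4⟩ := h
  refine ⟨h1, h2, by simp, by simp, p.connected_induce_support, ?_, ?_⟩
  · intro y hy z hz a b
    rw [h3 y hy a, h3 z hz b]
  · intro y hy z hz a b
    rw [h4 y hy a.symm, h4 z hz b.symm]

lemma IsPendantLink.exists_isWeaklyTollWalk (h : IsPendantLink G u v C) {x : V} (hx : x ∈ C) :
    ∃ p : G.Walk u v, IsWeaklyTollWalk G p ∧ x ∈ p.support := by
  obtain ⟨p, hp⟩ := exists_walk_support_subset h.connected h.left_mem hx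
  obtain ⟨q, hq⟩ := exists_walk_support_subset h.connected hx h.right_mem
  have hr : ∀ z ∈ (p.append q).support, z ∈ C := by
    intro z hz
    rw [Walk.mem_support_append_iff] at hz
    grind
  have hn : ¬ (p.append q).Nil := Walk.not_nil_of_ne h.ne
  refine ⟨p.append q, ⟨h.ne, h.not_adj, fun z hz hz' => ?_, fun z hz hz' => ?_⟩, by simp⟩
  · exact h.left_unique z (hr z hz) _ (hr _ (Walk.getVert_mem_support _ _)) hz'
      (Walk.adj_snd hn)
  · exact h.right_unique z (hr z hz) _ (hr _ (Walk.getVert_mem_support _ _)) hz'.symm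
      (Walk.adj_penultimate hn).symm

lemma linkInterval_subset_wtInterval {S : Set V} (hu : u ∈ S) (hv : v ∈ S) :
    linkInterval G u v ⊆ wtInterval G S := by
  rintro x ⟨C, hC, hx⟩
  obtain ⟨p, hp, hxp⟩ := hC.exists_isWeaklyTollWalk hx
  exact Or.inr ⟨u, hu, v, hv, p, hp, hxp⟩

lemma wtInterval_pair (hG : G.Connected) (hne : u ≠ v) (hadj : ¬ G.Adj u v) :
    wtInterval G {u, v} = linkInterval G u v := by
  refine Set.Subset.antisymm ?_ (linkInterval_subset_wtInterval (by simp) (by simp))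
  rintro x (hx | ⟨a, ha, b, hb, p, hp, hx⟩)
  · obtain ⟨C, hC⟩ := exists_isPendantLink hG hne hadj
    refine ⟨C, hC, ?_⟩
    rcases hx with rfl | rfl
    exacts [hC.left_mem, hC.right_mem]
  · have hl := hp.isPendantLink
    rcases ha with rfl | rfl <;> rcases hb with rfl | rfl
    · exact absurd rfl hl.ne
    · exact ⟨_, hl, hx⟩
    · exact ⟨_, hl.symm, hx⟩
    · exact absurd rfl hl.ne

lemma exists_link_of_not_wtConvex (hu : ¬ WTConvex G ({u}ᶜ : Set V)) :
    ∃ p q C, p ≠ u ∧ q ≠ u ∧ IsPendantLink G p q C ∧ u ∈ C := by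
  by_contra hcon
  refine hu (Set.Subset.antisymm ?_ Set.subset_union_left)
  rintro x (hx | ⟨a, ha, b, hb, p, hp, hx⟩)
  · exact hx
  · rintro rfl
    exact hcon ⟨a, b, _, ha, hb, hp.isPendantLink, hx⟩

/-- Vertices reaching `v` outside the closed neighborhood of `u`. -/
def farSide (G : SimpleGraph V) (u v : V) : Set V :=
  {x | ∃ C, (G.induce C).Connected ∧ x ∈ C ∧ v ∈ C ∧ ∀ y ∈ C, y ≠ u ∧ ¬ G.Adj u y}

lemma mem_farSide_of_adj {x y : V} (hy : y ∈ farSide G u v) (hxy : G.Adj x y) (hxu : x ≠ u)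
    (hux : ¬ G.Adj u x) : x ∈ farSide G u v := by
  obtain ⟨C, h1, h2, h3, h4⟩ := hy
  exact ⟨insert x C, connected_induce_insert h1 h2 hxy, by simp, by simp [h3], by grind⟩

lemma right_mem_farSide (hne : u ≠ v) (hadj : ¬ G.Adj u v) : v ∈ farSide G u v :=
  ⟨{v}, by simp [induce_singleton_eq_top, connected_top], by simp, by simp, by
    rintro y rfl; exact ⟨hne.symm, hadj⟩⟩

/-- A vertex `c` attached to the far side reaches `v` through the far side, in a connected set
where `v` has at most one neighbor. -/
lemma exists_connected_of_adj_farSide {c q : V} (hq : q ∈ farSide G u v) (hcq : G.Adj c q) :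
    ∃ D, (G.induce D).Connected ∧ c ∈ D ∧ v ∈ D ∧ (∀ y ∈ D, y = c ∨ y ∈ farSide G u v) ∧
      ∀ z ∈ D, ∀ w ∈ D, G.Adj v z → G.Adj v w → z = w := by
  obtain ⟨C, h1, h2, h3, h4⟩ := hq
  obtain ⟨D, hDC, hD, hc, hv, hu⟩ := exists_connected_subset_right_unique
    (connected_induce_insert h1 h2 hcq) (Set.mem_insert c C) (Set.mem_insert_of_mem c h3)
  refine ⟨D, hD, hc, hv, fun y hy => ?_, hu⟩
  rcases hDC hy with rfl | hyC
  · exact Or.inl rfl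
  · exact Or.inr ⟨C, h1, hyC, h3, h4⟩

lemma not_adj_of_mem_farSide {y : V} (hy : y ∈ farSide G u v) : y ≠ u ∧ ¬ G.Adj u y := by
  obtain ⟨C, h1, h2, h3, h4⟩ := hy
  exact h4 y h2

lemma mem_linkInterval_of_adj_farSide {c q : V} (hne : u ≠ v) (hadj : ¬ G.Adj u v)
    (hc : G.Adj u c) (hq : q ∈ farSide G u v) (hcq : G.Adj c q) : c ∈ linkInterval G u v := by
  obtain ⟨D, hD, hcD, hvD, hDf, hu⟩ := exists_connected_of_adj_farSide hq hcq
  have hf : ∀ y ∈ D, y = c ∨ (y ≠ u ∧ ¬ G.Adj u y) := fun y hy =>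
    (hDf y hy).imp_right not_adj_of_mem_farSide
  have hvu := fun h : G.Adj v u => hadj h.symm
  have hcu := hc.ne
  have hl := G.loopless.irrefl u
  exact ⟨insert u D, ⟨hne, hadj, by simp, by simp [hvD], connected_induce_insert hD hcD hc,
    by grind, by grind⟩, by simp [hcD]⟩

lemma IsPendantLink.exists_adj_farSide (h : IsPendantLink G u v C) :
    ∃ c ∈ C, ∃ q ∈ farSide G u v, G.Adj u c ∧ G.Adj c q := by
  obtain ⟨p, hp⟩ := exists_walk_support_subset h.connected h.left_mem h.right_mem
  have key : ∀ {x w : V} (p : G.Walk x w), w ∈ farSide G u v → (∀ z ∈ p.support, z ∈ C) →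
      x ∈ farSide G u v ∨ ∃ c ∈ C, ∃ q ∈ farSide G u v, G.Adj u c ∧ G.Adj c q := by
    intro x w p hw
    induction p with
    | nil => exact fun _ => Or.inl hw
    | @cons x y w hxy p ih =>
      intro hp
      rcases ih hw (fun z hz => hp z (by simp [hz])) with hy | hy
      · by_cases hux : G.Adj u x
        · exact Or.inr ⟨x, hp x (by simp), y, hy, hux, hxy⟩
        · refine Or.inl (mem_farSide_of_adj hy hxy ?_ hux)
          rintro rfl
          exact (not_adj_of_mem_farSide hy).2 hxy
      · exact Or.inr hy
  rcases key p (right_mem_farSide h.ne h.not_adj) hp with hu | hu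
  · exact absurd rfl (not_adj_of_mem_farSide hu).1
  · exact hu

lemma IsPendantLink.exists_adj_of_not_mem_farSide (h : IsPendantLink G u v C) {y : V}
    (hyC : y ∈ C) (hy : y ∉ farSide G u v) (hyu : y ≠ u) (huy : ¬ G.Adj u y) :
    ∃ z, z ∉ farSide G u v ∧ z ≠ u ∧ ¬ G.Adj u z ∧ ∃ c ∈ C, G.Adj u c ∧ G.Adj z c := by
  obtain ⟨p, hp⟩ := exists_walk_support_subset h.connected hyC h.right_mem
  have hv := right_mem_farSide h.ne h.not_adj
  clear h hyC
  induction p with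
  | nil => exact absurd hv hy
  | @cons y x w hyx p ih =>
    by_cases hux : G.Adj u x
    · exact ⟨y, hy, hyu, huy, x, hp x (by simp), hux, hyx⟩
    · refine ih (fun hx => hy (mem_farSide_of_adj hx hyx hyu huy)) ?_ hux
        (fun z hz => hp z (by simp [hz])) hv
      rintro rfl
      exact huy hyx.symm

end PendantLinks

section Maximal

variable {G : SimpleGraph V} {u v : V}

lemma exists_adj_not_mem_linkInterval (hG : G.Connected) (hne : u ≠ v) (hadj : ¬ G.Adj u v)
    {x : V} (hx : x ∉ linkInterval G u v) (hux : ¬ G.Adj u x) (hvx : ¬ G.Adj v x) :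
    ∃ d y, d ∉ linkInterval G u v ∧ y ∉ linkInterval G u v ∧ G.Adj d y ∧
      ¬ G.Adj u d ∧ ¬ G.Adj v d ∧ (G.Adj u y ∨ G.Adj v y) := by
  obtain ⟨p⟩ := hG.preconnected x u
  obtain ⟨C, hC⟩ := exists_isPendantLink hG hne hadj
  have hu : u ∈ linkInterval G u v := ⟨C, hC, hC.left_mem⟩
  clear hC
  have key : ∀ {x w : V} (p : G.Walk x w), w ∈ linkInterval G u v → x ∉ linkInterval G u v →
      ¬ G.Adj u x → ¬ G.Adj v x → ∃ d y, d ∉ linkInterval G u v ∧ y ∉ linkInterval G u v ∧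
      G.Adj d y ∧ ¬ G.Adj u d ∧ ¬ G.Adj v d ∧ (G.Adj u y ∨ G.Adj v y) := by
    intro x w p hw
    induction p with
    | nil => exact fun h => absurd hw h
    | @cons x y w hxy p ih =>
      intro hx hux hvx
      have hy : y ∉ linkInterval G u v := fun ⟨D, hD, hyD⟩ =>
        hx ⟨_, hD.insert hyD hxy hux hvx, by simp⟩
      by_cases h : G.Adj u y ∨ G.Adj v y
      · exact ⟨x, y, hx, hy, hxy, hux, hvx, h⟩
      · push Not at h
        exact ih hw hy h.1 h.2
  exact key p hu hx hux hvx

lemma not_adj_of_maximal [Finite V] (hG : G.Connected) (hne : u ≠ v) (hadj : ¬ G.Adj u v)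
    (hmax : ∀ w, w ≠ v → ¬ G.Adj w v →
      (linkInterval G w v).ncard ≤ (linkInterval G u v).ncard)
    {d y : V} (hd : d ∉ linkInterval G u v) (hy : y ∉ linkInterval G u v) (hdy : G.Adj d y)
    (hud : ¬ G.Adj u d) (hvd : ¬ G.Adj v d) : ¬ G.Adj u y := by
  intro huy
  obtain ⟨C, hC⟩ := exists_isPendantLink hG hne hadj
  have hdv : d ≠ v := by rintro rfl; exact hd ⟨C, hC, hC.right_mem⟩
  have hvy : ¬ G.Adj v y := fun h =>
    hy (mem_linkInterval_of_adj_farSide hne hadj huy (right_mem_farSide hne hadj) h.symm)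
  have key : ∀ D, IsPendantLink G u v D → IsPendantLink G d v (insert d (insert y D)) := by
    intro D hD
    have h1 : ∀ z ∈ D, ¬ G.Adj d z := fun z hz hdz =>
      hd ⟨_, hD.insert hz hdz hud hvd, by simp⟩
    have hl := G.loopless.irrefl d
    have hr := hD.right_unique
    refine ⟨hdv, fun h => hvd h.symm, by simp, by simp [hD.right_mem], connected_induce_insert
      (connected_induce_insert hD.connected hD.left_mem huy.symm) (by simp) hdy, by grind,
      by grind⟩
  refine absurd (hmax d hdv fun h => hvd h.symm) (not_le.2 ?_)
  refine Set.ncard_lt_ncard ⟨fun x ⟨D, hD, hx⟩ => ⟨_, key D hD, by simp [hx]⟩, fun hsub => ?_⟩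
    (Set.toFinite _)
  exact hd (hsub ⟨_, key C hC, by simp⟩)

/-- Everything outside a maximum interval is adjacent to one of its ends. -/
lemma adj_or_adj_of_maximal [Finite V] (hG : G.Connected) (hne : u ≠ v) (hadj : ¬ G.Adj u v)
    (hmax : ∀ w z, w ≠ z → ¬ G.Adj w z →
      (linkInterval G w z).ncard ≤ (linkInterval G u v).ncard)
    {x : V} (hx : x ∉ linkInterval G u v) : G.Adj u x ∨ G.Adj v x := by
  by_contra h
  push Not at h
  obtain ⟨d, y, hd, hy, hdy, hud, hvd, huy | hvy⟩ :=
    exists_adj_not_mem_linkInterval hG hne hadj hx h.1 h.2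
  · exact not_adj_of_maximal hG hne hadj (fun w => hmax w v) hd hy hdy hud hvd huy
  · rw [linkInterval_comm] at hd hy hmax
    exact not_adj_of_maximal hG hne.symm (fun e => hadj e.symm) (fun w => hmax w u) hd hy hdy
      hvd hud hvy

/-- A vertex outside the closed neighborhood of `u` and outside the far side, attached to a
neighbor of `u` that reaches the far side, covers together with `u` and `v` all neighbors
of `u`. -/
lemma mem_wtInterval_of_near_vertex (hne : u ≠ v) (hadj : ¬ G.Adj u v) {z c q a : V}
    (hz : z ∉ farSide G u v) (hzu : z ≠ u) (huz : ¬ G.Adj u z) (huc : G.Adj u c)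
    (hzc : G.Adj z c) (hq : q ∈ farSide G u v) (hcq : G.Adj c q) (hua : G.Adj u a)
    (ha : a ∉ linkInterval G u v) {S : Set V} (hu : u ∈ S) (hv : v ∈ S) (hzS : z ∈ S) :
    a ∈ wtInterval G S := by
  have hvf := right_mem_farSide hne hadj
  have hav : ¬ G.Adj a v := fun h =>
    ha (mem_linkInterval_of_adj_farSide hne hadj hua hvf h)
  have hlz := G.loopless.irrefl z
  have hlu := G.loopless.irrefl u
  by_cases haz : G.Adj a z
  · refine linkInterval_subset_wtInterval hu hzS ⟨{u, a, z}, ⟨hzu.symm, huz, by simp, by simp,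
      connected_induce_insert (induce_pair_connected_of_adj haz) (by simp) hua, by grind, ?_⟩,
      by simp⟩
    have := fun h : G.Adj z u => huz h.symm
    grind
  · have hzf : ∀ y ∈ farSide G u v, ¬ G.Adj z y := fun y hy h =>
      hz (mem_farSide_of_adj hy h hzu huz)
    obtain ⟨D, hD, hcD, hvD, hDf, hr⟩ := exists_connected_of_adj_farSide hq hcq
    refine linkInterval_subset_wtInterval hzS hv ⟨insert a (insert z (insert u D)), ⟨?_,
      hzf v hvf, by simp, by simp [hvD], ?_, ?_, ?_⟩, by simp⟩
    · rintro rfl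
      exact hz hvf
    · refine connected_induce_insert (connected_induce_insert (connected_induce_insert hD hcD huc)
        (by simp [hcD]) hzc) (by simp) hua.symm
    · have := fun h : G.Adj z u => huz h.symm
      have := fun h : G.Adj z a => haz h.symm
      grind
    · have := fun h : G.Adj v u => hadj h.symm
      have := fun h : G.Adj v a => hav h.symm
      have := fun h : G.Adj v z => hzf v hvf h.symm
      grind

lemma isPendantLink_insert_left {C : Set V} (h : IsPendantLink G u v C) {a : V} (hua : G.Adj u a)
    (hav : ¬ G.Adj a v) (haC : ∀ y ∈ C, G.Adj a y → y = u) (hne : a ≠ v) :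
    IsPendantLink G a v (insert a C) := by
  have hl := G.loopless.irrefl a
  have hr := h.right_unique
  have := fun h : G.Adj v a => hav h.symm
  exact ⟨hne, hav, by simp, by simp [h.right_mem],
    connected_induce_insert h.connected h.left_mem hua.symm, by grind, by grind⟩

lemma isPendantLink_replace_left {C : Set V} (h : IsPendantLink G u v C) {a : V}
    (hav : ¬ G.Adj a v) (haC : ∀ y ∈ C, G.Adj a y → y = u ∨ G.Adj u y)
    (hau : ∀ y ∈ C, G.Adj u y → G.Adj a y) (hne : a ≠ v) :
    IsPendantLink G a v (insert a (C \ {u})) := by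
  have hl := G.loopless.irrefl a
  have hr := h.right_unique
  have hl' := h.left_unique
  have := fun h : G.Adj v a => hav h.symm
  exact ⟨hne, hav, by simp, by simp [h.right_mem, h.ne.symm],
    connected_induce_replace h.connected h.left_mem hau, by grind, by grind⟩

/-- Under a local condition at `u`, a neighbor `a` of `u` outside a maximum interval is adjacent to
all neighbors of `u` inside the interval, and may replace `u` as an end of the interval. -/
lemma replace_end_of_maximal [Finite V] (hG : G.Connected) (hne : u ≠ v) (hadj : ¬ G.Adj u v)
    (hmax : ∀ w z, w ≠ z → ¬ G.Adj w z →
      (linkInterval G w z).ncard ≤ (linkInterval G u v).ncard)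
    (hnear : ∀ a, G.Adj u a → a ∉ linkInterval G u v → ∀ C, IsPendantLink G u v C →
      ∀ y ∈ C, G.Adj a y → y = u ∨ G.Adj u y)
    {a : V} (hua : G.Adj u a) (ha : a ∉ linkInterval G u v) :
    (∀ C, IsPendantLink G u v C → ∀ c ∈ C, G.Adj u c → G.Adj a c) ∧
      insert a (linkInterval G u v \ {u}) = linkInterval G a v := by
  have hvf := right_mem_farSide hne hadj
  have hav : ¬ G.Adj a v := fun h =>
    ha (mem_linkInterval_of_adj_farSide hne hadj hua hvf h)
  have hne' : a ≠ v := by rintro rfl; exact hadj hua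
  obtain ⟨C₀, hC₀⟩ := exists_isPendantLink hG hne hadj
  have hrep : ∀ C, IsPendantLink G u v C → ∀ c ∈ C, G.Adj u c → G.Adj a c →
      IsPendantLink G a v (insert a (C \ {u})) := fun C hC c hcC huc hac =>
    isPendantLink_replace_left hC hav (hnear a hua ha C hC)
      (fun y hy huy => hC.left_unique c hcC y hy huc huy ▸ hac) hne'
  have hins : ∀ C, IsPendantLink G u v C → ∀ c ∈ C, G.Adj u c → ¬ G.Adj a c →
      IsPendantLink G a v (insert a C) := fun C hC c hcC huc hac => by
    refine isPendantLink_insert_left hC hua hav (fun y hy hay => ?_) hne'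
    refine (hnear a hua ha C hC y hy hay).resolve_right fun huy => hac ?_
    rwa [hC.left_unique c hcC y hy huc huy]
  have hsub : linkInterval G u v \ {u} ⊆ linkInterval G a v := by
    rintro x ⟨⟨C, hC, hx⟩, hxu⟩
    obtain ⟨c, hcC, -, -, huc, -⟩ := hC.exists_adj_farSide
    by_cases hac : G.Adj a c
    · exact ⟨_, hrep C hC c hcC huc hac, Or.inr ⟨hx, hxu⟩⟩
    · exact ⟨_, hins C hC c hcC huc hac, Or.inr hx⟩
  have haI : a ∈ linkInterval G a v := by
    obtain ⟨D, hD⟩ := exists_isPendantLink hG hne' hav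
    exact ⟨D, hD, hD.left_mem⟩
  have huI : u ∈ linkInterval G u v := ⟨C₀, hC₀, hC₀.left_mem⟩
  have hle := hmax a v hne' hav
  have hcov : ∀ C, IsPendantLink G u v C → ∀ c ∈ C, G.Adj u c → G.Adj a c := by
    intro C hC c hcC huc
    by_contra hac
    refine absurd hle (not_le.2 (Set.ncard_lt_ncard ⟨fun x hx => ?_, fun h => ha (h haI)⟩
      (Set.toFinite _)))
    by_cases hxu : x = u
    · subst hxu
      exact ⟨_, hins C hC c hcC huc hac, Or.inr hC.left_mem⟩
    · exact hsub ⟨hx, hxu⟩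
  refine ⟨hcov, ?_⟩
  refine Set.eq_of_subset_of_ncard_le (Set.insert_subset haI hsub) ?_ (Set.toFinite _)
  rwa [Set.ncard_exchange ha huI]

/-- Under a local condition at `u`, the neighbors of `u` outside a maximum interval are true twins
of `u`. -/
lemma eq_or_adj_iff_of_maximal [Finite V] (hG : G.Connected) (hne : u ≠ v) (hadj : ¬ G.Adj u v)
    (hmax : ∀ w z, w ≠ z → ¬ G.Adj w z →
      (linkInterval G w z).ncard ≤ (linkInterval G u v).ncard)
    (hnear : ∀ a, G.Adj u a → a ∉ linkInterval G u v → ∀ C, IsPendantLink G u v C →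
      ∀ y ∈ C, G.Adj a y → y = u ∨ G.Adj u y)
    {a : V} (hua : G.Adj u a) (ha : a ∉ linkInterval G u v) (y : V) :
    (y = a ∨ G.Adj a y) ↔ (y = u ∨ G.Adj u y) := by
  have hvf := right_mem_farSide hne hadj
  have hnv : ∀ b, G.Adj u b → b ∉ linkInterval G u v → ¬ G.Adj b v := fun b hub hb h =>
    hb (mem_linkInterval_of_adj_farSide hne hadj hub hvf h)
  have hrep : ∀ b, G.Adj u b → b ∉ linkInterval G u v → _ := fun b hub hb =>
    replace_end_of_maximal hG hne hadj hmax hnear hub hb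
  constructor
  · rintro (rfl | hay)
    · exact Or.inr hua
    · by_cases hy : y ∈ linkInterval G u v
      · obtain ⟨C, hC, hyC⟩ := hy
        exact hnear a hua ha C hC y hyC hay
      · by_contra hcon
        push Not at hcon
        have hvy := (adj_or_adj_of_maximal hG hne hadj hmax hy).resolve_left hcon.2
        exact ha (mem_linkInterval_of_adj_farSide hne hadj hua
          (mem_farSide_of_adj hvf hvy.symm hcon.1 hcon.2) hay)
  · rintro (rfl | huy)
    · exact Or.inr hua.symm
    · by_cases hy : y ∈ linkInterval G u v
      · obtain ⟨C, hC, hyC⟩ := hy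
        exact Or.inr ((hrep a hua ha).1 C hC y hyC huy)
      · by_contra hcon
        push Not at hcon
        obtain ⟨C, hC⟩ := exists_isPendantLink hG hne hadj
        obtain ⟨c, hcC, -, -, huc, -⟩ := hC.exists_adj_farSide
        have hav : a ≠ v := by rintro rfl; exact hadj hua
        have hlink := isPendantLink_replace_left hC (hnv a hua ha) (hnear a hua ha C hC)
          ((hrep a hua ha).1 C hC) hav
        have hmem : y ∈ linkInterval G a v :=
          ⟨_, hlink.insert (x := y) (Or.inr ⟨hcC, huc.ne'⟩) ((hrep y huy hy).1 C hC c hcC huc)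
            hcon.2 fun h => hnv y huy hy h.symm, by simp⟩
        rw [← (hrep a hua ha).2] at hmem
        rcases hmem with h | h
        · exact hcon.1 h
        · exact hy h.1

/-- True twins of a vertex on a pendant link lie on such a link, unless they are its ends. -/
lemma mem_linkInterval_of_twin {p q a : V} {C : Set V} (hC : IsPendantLink G p q C) (hu : u ∈ C)
    (hpu : p ≠ u) (hqu : q ≠ u) (hpa : a ≠ p) (hqa : a ≠ q)
    (htwin : ∀ y, (y = a ∨ G.Adj a y) ↔ (y = u ∨ G.Adj u y)) : a ∈ linkInterval G p q := by
  by_cases haC : a ∈ C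
  · exact ⟨C, hC, haC⟩
  obtain ⟨h1, h2, h3, h4, h5, h6, h7⟩ := hC
  have hp : G.Adj p a → G.Adj p u := fun h =>
    (((htwin p).1 (Or.inr h.symm)).resolve_left hpu).symm
  have hq : G.Adj q a → G.Adj q u := fun h =>
    (((htwin q).1 (Or.inr h.symm)).resolve_left hqu).symm
  refine ⟨insert a (C \ {u}), ⟨h1, h2, by simp [h3, hpu], by simp [h4, hqu],
    connected_induce_replace h5 hu fun y hy huy => ?_, ?_, ?_⟩, by simp⟩
  · refine ((htwin y).2 (Or.inr huy)).resolve_left ?_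
    rintro rfl
    exact haC hy
  · grind
  · grind

/-- If an end `u` of a maximum interval lies inside another pendant link, two vertices suffice to
cover, together with the ends of the interval, all neighbors of `u`. -/
lemma exists_pair_covering_neighbors [Finite V] (hG : G.Connected) (hne : u ≠ v)
    (hadj : ¬ G.Adj u v)
    (hmax : ∀ w z, w ≠ z → ¬ G.Adj w z →
      (linkInterval G w z).ncard ≤ (linkInterval G u v).ncard)
    (hu : ¬ WTConvex G ({u}ᶜ : Set V)) :
    ∃ p q, ∀ S : Set V, u ∈ S → v ∈ S → p ∈ S → q ∈ S →
      ∀ a, G.Adj u a → a ∉ linkInterval G u v → a ∈ wtInterval G S := by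
  by_cases hz : ∃ z c q, z ∉ farSide G u v ∧ z ≠ u ∧ ¬ G.Adj u z ∧ G.Adj u c ∧ G.Adj z c ∧
      q ∈ farSide G u v ∧ G.Adj c q
  · obtain ⟨z, c, q, hz, hzu, huz, huc, hzc, hq, hcq⟩ := hz
    exact ⟨z, z, fun S huS hvS hzS _ a hua ha =>
      mem_wtInterval_of_near_vertex hne hadj hz hzu huz huc hzc hq hcq hua ha huS hvS hzS⟩
  · obtain ⟨p, q, C, hpu, hqu, hC, huC⟩ := exists_link_of_not_wtConvex hu
    refine ⟨p, q, fun S huS hvS hpS hqS a hua ha => ?_⟩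
    by_cases hap : a = p
    · exact Or.inl (hap ▸ hpS)
    by_cases haq : a = q
    · exact Or.inl (haq ▸ hqS)
    refine linkInterval_subset_wtInterval hpS hqS (mem_linkInterval_of_twin hC huC hpu hqu hap haq
      (eq_or_adj_iff_of_maximal hG hne hadj hmax ?_ hua ha))
    intro b hub hb D hD y hyD hby
    by_contra hcon
    push Not at hcon
    have hyf : y ∉ farSide G u v := fun h =>
      hb (mem_linkInterval_of_adj_farSide hne hadj hub h hby)
    obtain ⟨z, hzf, hzu, huz, c, hcD, huc, hzc⟩ :=
      hD.exists_adj_of_not_mem_farSide hyD hyf hcon.1 hcon.2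
    obtain ⟨c', hc'D, q', hq', huc', hcq'⟩ := hD.exists_adj_farSide
    obtain rfl := hD.left_unique c hcD c' hc'D huc huc'
    exact hz ⟨z, c, q', hzf, hzu, huz, huc, hzc, hq', hcq'⟩

/-- The ends of a maximum interval in a connected noncomplete graph are distinct and
nonadjacent. -/
lemma ne_and_not_adj_of_maximal [Finite V] (hG : G.Connected)
    (hnc : ∃ a b : V, a ≠ b ∧ ¬ G.Adj a b)
    (hmax : ∀ w z : V, (wtInterval G {w, z}).ncard ≤ (wtInterval G {u, v}).ncard) :
    u ≠ v ∧ ¬ G.Adj u v := by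
  obtain ⟨a, b, hab, hnab⟩ := hnc
  by_contra hcon
  have hsub : wtInterval G {u, v} ⊆ {u, v} := by
    rintro x (hx | ⟨c, hc, d, hd, p, hp, -⟩)
    · exact hx
    · exfalso
      have h1 := hp.1
      have h2 := hp.2.1
      have h3 := fun h : G.Adj u v => h.symm
      simp only [Set.mem_insert_iff, Set.mem_singleton_iff] at hc hd
      grind
  obtain ⟨C, hC⟩ := exists_isPendantLink hG hab hnab
  obtain ⟨c, hcC, -, -, hac, -⟩ := hC.exists_adj_farSide
  have h3 : ({a, c, b} : Set V) ⊆ wtInterval G {a, b} := by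
    rw [wtInterval_pair hG hab hnab]
    have hCI := hC.subset_linkInterval
    rintro x (rfl | rfl | rfl)
    exacts [hCI hC.left_mem, hCI hcC, hCI hC.right_mem]
  have hcb : c ≠ b := by rintro rfl; exact hnab hac
  have hcard : ({a, c, b} : Set V).ncard = 3 :=
    Set.ncard_eq_three.2 ⟨a, c, b, hac.ne, hab, hcb, rfl⟩
  have h4 := Set.ncard_le_ncard h3 (Set.toFinite _)
  have h5 := Set.ncard_le_ncard hsub (Set.toFinite _)
  have h6 := hmax a b
  have h7 : ({u, v} : Set V).ncard ≤ 2 := (Set.ncard_insert_le u {v}).trans (by simp)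
  omega

end Maximal

/-- if `u,v` maximize the weakly toll interval in a connected
non-complete graph and neither is a weakly toll extreme vertex, then
`wtn(G) ≤ 8`. -/
theorem stmt14 [Fintype V] (G : SimpleGraph V) (hconn : G.Connected)
    (hnc : ∃ a b : V, a ≠ b ∧ ¬ G.Adj a b) (u v : V)
    (hmax : ∀ w z : V, (wtInterval G {w, z}).ncard ≤ (wtInterval G {u, v}).ncard)
    (hu : ¬ WTConvex G ({u}ᶜ : Set V)) (hv : ¬ WTConvex G ({v}ᶜ : Set V)) :
    wtn G ≤ 8 := by
  classical
  obtain ⟨hne, hadj⟩ := ne_and_not_adj_of_maximal hconn hnc hmax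
  rw [wtInterval_pair hconn hne hadj] at hmax
  have hmax' : ∀ w z, w ≠ z → ¬ G.Adj w z →
      (linkInterval G w z).ncard ≤ (linkInterval G u v).ncard := fun w z hwz hnwz => by
    rw [← wtInterval_pair hconn hwz hnwz]
    exact hmax w z
  obtain ⟨p, q, hpq⟩ := exists_pair_covering_neighbors hconn hne hadj hmax' hu
  obtain ⟨r, s, hrs⟩ := exists_pair_covering_neighbors hconn hne.symm (fun h => hadj h.symm)
    (by rwa [linkInterval_comm v u]) hv
  rw [linkInterval_comm v u] at hrs
  let S : Finset V := {u, v, p, q, r, s}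
  have hS : wtInterval G (S : Set V) = Set.univ := by
    refine Set.eq_univ_of_forall fun x => ?_
    by_cases hx : x ∈ linkInterval G u v
    · exact linkInterval_subset_wtInterval (by simp [S]) (by simp [S]) hx
    · rcases adj_or_adj_of_maximal hconn hne hadj hmax' hx with h | h
      · exact hpq S (by simp [S]) (by simp [S]) (by simp [S]) (by simp [S]) x h hx
      · exact hrs S (by simp [S]) (by simp [S]) (by simp [S]) (by simp [S]) x h hx
  calc wtn G ≤ S.card := Nat.sInf_le ⟨S, rfl, hS⟩
    _ ≤ 6 := Finset.card_le_six
    _ ≤ 8 := by norm_num
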